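/- Let r : X → Y be a pointed map between pointed topological spaces, l : Y → X a pointed map, and h a pointed homotopy from the identity of X to l ∘ r (so l is a left homotopy inverse of r). Then the homotopy fiber of r is homotopy equivalent to the loop space of the homotopy fiber of l. -/

import Mathlib

/-! A homotopy of the source lifts to homotopy fibers, by prolonging paths backwards along it. So a
strong deformation retract of the source has an equivalent homotopy fiber, and comparing the two
ends of the cylinder `I × X` shows that homotopic maps have equivalent homotopy fibers.

Since `l ∘ r` is homotopic to the identity, its homotopy fiber is therefore contractible. Hence the
map `hofib (l ∘ r) → hofib l` is homotopic to a constant map, and its homotopy fiber is the loop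
space of `hofib l`. On the other hand, for any composable `r` and `l`, the homotopy fiber of
`hofib (l ∘ r) → hofib l` is `hofib r`. -/

open ContinuousMap

variable {X Y : Type*} [TopologicalSpace X] [TopologicalSpace Y]

/-- The homotopy fiber of `f : X → Y` over `y₀ : Y`: pairs `(x, γ)` of a point of `X` and a
path from `f x` to `y₀`. -/
def HoFib (f : C(X, Y)) (y₀ : Y) : Type _ :=
  {p : X × C(unitInterval, Y) // p.2 0 = f p.1 ∧ p.2 1 = y₀}

instance (f : C(X, Y)) (y₀ : Y) : TopologicalSpace (HoFib f y₀) :=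
  inferInstanceAs (TopologicalSpace
    {p : X × C(unitInterval, Y) // p.2 0 = f p.1 ∧ p.2 1 = y₀})

/-- The basepoint of the homotopy fiber of a pointed map: the basepoint of the source together
with the constant path. -/
def HoFib.base (f : C(X, Y)) {x₀ : X} {y₀ : Y} (hf : f x₀ = y₀) : HoFib f y₀ :=
  ⟨(x₀, ContinuousMap.const _ y₀), by simp [hf], rfl⟩

namespace HoFib

open unitInterval

variable {W Z : Type*} [TopologicalSpace W] [TopologicalSpace Z] {f : C(X, Y)} {y : Y}

/-- The point of the source underlying a point of the homotopy fiber. -/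
def point (a : HoFib f y) : X := a.1.1

/-- The path underlying a point of the homotopy fiber. -/
def path (a : HoFib f y) : C(I, Y) := a.1.2

@[simp]
theorem path_zero (a : HoFib f y) : a.path 0 = f a.point := a.2.1

@[simp]
theorem path_one (a : HoFib f y) : a.path 1 = y := a.2.2

@[simp]
theorem point_base {x : X} (hx : f x = y) : (base f hx).point = x := rfl

@[simp]
theorem path_base {x : X} (hx : f x = y) (t : I) : (base f hx).path t = y := rfl

@[ext]
theorem ext {a b : HoFib f y} (hpoint : a.point = b.point) (hpath : ∀ t, a.path t = b.path t) :
    a = b :=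
  Subtype.ext (Prod.ext hpoint (ContinuousMap.ext hpath))

@[fun_prop]
theorem continuous_point : Continuous (point : HoFib f y → X) :=
  continuous_fst.comp continuous_subtype_val

@[fun_prop]
theorem continuous_path : Continuous (path : HoFib f y → C(I, Y)) :=
  continuous_snd.comp continuous_subtype_val

/-- The universal property of the homotopy fiber: a map into it is a map `u` into the source
together with a homotopy from `f ∘ u` to the constant map. -/
def lift (u : C(Z, X)) (H : (f.comp u).Homotopy (.const Z y)) : C(Z, HoFib f y) where
  toFun z := ⟨(u z, ⟨fun t ↦ H (t, z), by fun_prop⟩), by simp, by simp⟩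
  continuous_toFun := Continuous.subtype_mk (u.continuous.prodMk
    (ContinuousMap.curry ⟨fun p : Z × I ↦ H (p.2, p.1), by fun_prop⟩).continuous) _

@[simp]
theorem point_lift (u : C(Z, X)) (H : (f.comp u).Homotopy (.const Z y)) (z : Z) :
    (lift u H z).point = u z := rfl

@[simp]
theorem path_lift (u : C(Z, X)) (H : (f.comp u).Homotopy (.const Z y)) (z : Z) (t : I) :
    (lift u H z).path t = H.toContinuousMap (t, z) := rfl

section Composition

variable (f : C(X, Y)) (g : C(Y, Z)) {z : Z}

/-- The map `(x, γ) ↦ (f x, γ)` from the homotopy fiber of `g ∘ f` to that of `g`. -/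
def map : C(HoFib (g.comp f) z, HoFib g z) :=
  lift ⟨fun a ↦ f a.point, by fun_prop⟩
    { toFun p := p.2.path p.1
      map_zero_left := by simp
      map_one_left := by simp }

@[simp]
theorem point_map (a : HoFib (g.comp f) z) : (map f g a).point = f a.point := rfl

@[simp]
theorem path_map (a : HoFib (g.comp f) z) (t : I) : (map f g a).path t = a.path t := rfl

theorem map_base {x : X} {y : Y} (hf : f x = y) (hg : g y = z) :
    map f g (base (g.comp f) (by simp [hf, hg] : g.comp f x = z)) = base g hg := by
  ext <;> simp [hf]

end Composition

section HomotopyLifting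

variable {k : C(X, X)} (K : (ContinuousMap.id X).Homotopy k)

/-- The path of `a`, prolonged to the times `s ∈ [-1, 0]` by the image under `f` of the reversed
track of `a.point` under the deformation `K`. -/
noncomputable def prolong (a : HoFib f y) (s : ℝ) : Y :=
  if s ≤ 0 then f (K (Set.projIcc 0 1 zero_le_one (-s), a.point))
  else a.path (Set.projIcc 0 1 zero_le_one s)

theorem prolong_neg (a : HoFib f y) (t : I) : prolong K a (-t) = f (K (t, a.point)) := by
  simp [prolong, t.2.1]

theorem prolong_coe (a : HoFib f y) (t : I) : prolong K a t = a.path t := by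
  rcases t.2.1.eq_or_lt with ht | ht
  · obtain rfl : t = 0 := Subtype.ext ht.symm
    simp [prolong]
  · simp [prolong, ht.not_ge]

theorem continuous_prolong : Continuous fun p : HoFib f y × ℝ ↦ prolong K p.1 p.2 := by
  refine Continuous.if_le (by fun_prop) (by fun_prop) (by fun_prop) (by fun_prop) ?_
  rintro ⟨a, s⟩ (rfl : s = 0)
  simp

/-- The lift of a deformation of the source to the homotopy fiber. At time `t` the prolonged path
is run through from time `-t` on, so that the lift starts strictly at the identity. -/
noncomputable def liftDeformation (f : C(X, Y)) (y : Y) : C(I × HoFib f y, HoFib f y) :=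
  lift ⟨fun p ↦ K (p.1, p.2.point), by fun_prop⟩
    { toFun p := prolong K p.2.2 (p.1 - p.2.1 * (1 - p.1))
      continuous_toFun := (continuous_prolong K).comp
        (f := fun q : I × I × HoFib f y ↦ (q.2.2, (q.1 : ℝ) - q.2.1 * (1 - q.1))) (by fun_prop)
      map_zero_left p := by simpa using prolong_neg K p.2 p.1
      map_one_left p := by simpa using prolong_coe K p.2 1 }

@[simp]
theorem point_liftDeformation (p : I × HoFib f y) :
    (liftDeformation K f y p).point = K (p.1, p.2.point) := rfl

@[simp]
theorem liftDeformation_zero (a : HoFib f y) : liftDeformation K f y (0, a) = a := by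
  ext t
  · simp
  · simpa [liftDeformation] using prolong_coe K a t

end HomotopyLifting

section HomotopyInvariance

/-- The homotopy fiber of the restriction of `f` to a strong deformation retract of its source is
homotopy equivalent to the homotopy fiber of `f`. -/
noncomputable def homotopyEquivOfDeformationRetract {i : C(W, X)} {ρ : C(X, W)}
    (hρ : Function.LeftInverse ρ i)
    (K : HomotopyRel (.id X) (i.comp ρ) (Set.range i)) (f : C(X, Y)) (y : Y) :
    HoFib (f.comp i) y ≃ₕ HoFib f y :=
  let D := liftDeformation K.toHomotopy f y
  { toFun := map i f
    invFun := lift ⟨fun a ↦ ρ a.point, by fun_prop⟩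
      { toFun p := (D (1, p.2)).path p.1
        map_zero_left := by simp [D]
        map_one_left := by simp }
    left_inv := .symm
      ⟨{toContinuousMap := lift ⟨fun p ↦ p.2.point, by fun_prop⟩
          { toFun p := (D (p.2.1, map i f p.2.2)).path p.1
            map_zero_left p :=
              (path_zero _).trans (congrArg f (K.eq_fst p.1 ⟨p.2.point, rfl⟩))
            map_one_left := by simp }
        map_zero_left a := by ext <;> simp [D]
        map_one_left a := by ext <;> simp [D, hρ _] }⟩
    right_inv := .symm
      ⟨{toContinuousMap := D
        map_zero_left a := by simp [D]
        map_one_left a := by ext <;> simp [D] }⟩ }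

/-- The homotopy fibers of the stages of a homotopy are homotopy equivalent to the homotopy fiber
of the homotopy itself, regarded as a map on the cylinder `I × X`. -/
noncomputable def homotopyEquivCylinder (H : C(I × X, Y)) (y : Y) (t : I) :
    HoFib (H.curry t) y ≃ₕ HoFib H y :=
  homotopyEquivOfDeformationRetract (i := .prodMk (.const X t) (.id X)) (ρ := .snd) (fun _ ↦ rfl)
    { toFun p := (Set.Icc.convexComb p.2.1 t p.1, p.2.2)
      map_zero_left := by simp
      map_one_left := by simp
      prop' := by
        rintro s _ ⟨x, rfl⟩
        simp } H y

theorem nonempty_homotopyEquiv_of_homotopic {f g : C(X, Y)} (h : f.Homotopic g) (y : Y) :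
    Nonempty (HoFib f y ≃ₕ HoFib g y) := by
  obtain ⟨H⟩ := h
  have e₀ := homotopyEquivCylinder H.toContinuousMap y 0
  have e₁ := homotopyEquivCylinder H.toContinuousMap y 1
  rw [show H.toContinuousMap.curry 0 = f from H.curry_zero] at e₀
  rw [show H.toContinuousMap.curry 1 = g from H.curry_one] at e₁
  exact ⟨e₀.trans e₁.symm⟩

end HomotopyInvariance

section Contractible

instance contractibleSpace_id (x : X) : ContractibleSpace (HoFib (.id X) x) := by
  refine (contractible_iff_id_nullhomotopic _).mpr ⟨base (.id X) (x₀ := x) rfl, ⟨?_⟩⟩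
  exact
    { toContinuousMap := lift ⟨fun p ↦ p.2.path p.1, by fun_prop⟩
        { toFun p := p.2.2.path (max p.2.1 p.1)
          map_zero_left := by simp
          map_one_left := by simp [max_eq_right le_one'] }
      map_zero_left a := by ext <;> simp
      map_one_left a := by ext <;> simp [max_eq_left le_one'] <;> rfl }

theorem contractibleSpace_of_homotopic_id {f : C(X, X)} (h : (ContinuousMap.id X).Homotopic f)
    (x : X) : ContractibleSpace (HoFib f x) :=
  (nonempty_homotopyEquiv_of_homotopic h.symm x).some.contractibleSpace

/-- The homotopy fiber of a constant map is the product of the source and a path space. -/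
def constHomeomorph (b y : Y) : HoFib (.const X b) y ≃ₜ X × Path b y where
  toFun a := (a.point, ⟨a.path, by simp, by simp⟩)
  invFun p := lift .fst
    { toFun (q : I × X × Path b y) := q.2.2 q.1
      map_zero_left := by simp
      map_one_left := by simp } p
  left_inv a := by ext <;> simp
  right_inv p := by ext <;> rfl
  continuous_toFun := continuous_point.prodMk (Path.continuous_uncurry_iff.mp
    (by fun_prop : Continuous fun p : HoFib (.const X b) y × I ↦ p.1.path p.2))
  continuous_invFun := ContinuousMap.continuous _

theorem homotopic_const_of_contractibleSpace [ContractibleSpace X] (f : C(X, Y)) (x : X) :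
    f.Homotopic (.const X (f x)) := by
  obtain ⟨c, hc⟩ := id_nullhomotopic X
  have hcx : (ContinuousMap.const X c).Homotopic (.const X x) :=
    have := Nonempty.intro x
    ContinuousMap.homotopic_const_iff.mpr (PathConnectedSpace.joined c x)
  exact .comp (.refl f) (hc.trans hcx)

theorem nonempty_homotopyEquiv_path [ContractibleSpace X] (f : C(X, Y)) (x : X) (y : Y) :
    Nonempty (HoFib f y ≃ₕ Path (f x) y) := by
  obtain ⟨e⟩ := nonempty_homotopyEquiv_of_homotopic (homotopic_const_of_contractibleSpace f x) y
  obtain ⟨c⟩ := ContractibleSpace.hequiv_unit X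
  exact ⟨e.trans <| (constHomeomorph (f x) y).toHomotopyEquiv.trans <|
    (c.prodCongr (.refl _)).trans (Homeomorph.uniqueProd Unit _).toHomotopyEquiv⟩

end Contractible

section IteratedFiber

variable {r : C(X, Y)} {l : C(Y, Z)} {z : Z} {hl : l y = z}

section LiftMap

variable (u : C(W, X)) (H : (r.comp u).Homotopy (.const W y))
  (S : (l.comp H.toContinuousMap).Homotopy (.const (I × W) z))
  (hS : ∀ s w, S.toContinuousMap (s, (1, w)) = z)

/-- A map into the homotopy fiber of `HoFib.map r l` amounts to a map `u` into the source of `r`, a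
homotopy `H` from `r ∘ u` to the constant map, and a homotopy `S` from `l ∘ H` to the constant map
which is constant on the end of `H`. -/
def liftMap : C(W, HoFib (map r l) (base l hl)) :=
  lift
    (lift u
      { toFun p := S (p.1, (0, p.2))
        map_zero_left := by simp
        map_one_left := by simp })
    { toContinuousMap := lift H.toContinuousMap S
      map_zero_left w := by ext <;> simp
      map_one_left w := by ext <;> simp [hS] }

@[simp]
theorem point_point_liftMap (w : W) : (liftMap (hl := hl) u H S hS w).point.point = u w := rfl

@[simp]
theorem path_point_liftMap (w : W) (s : I) :
    (liftMap (hl := hl) u H S hS w).point.path s = S.toContinuousMap (s, (0, w)) := rfl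

@[simp]
theorem point_path_liftMap (w : W) (t : I) :
    ((liftMap (hl := hl) u H S hS w).path t).point = H.toContinuousMap (t, w) := rfl

@[simp]
theorem path_path_liftMap (w : W) (t s : I) :
    ((liftMap (hl := hl) u H S hS w).path t).path s = S.toContinuousMap (s, (t, w)) := rfl

end LiftMap

/-- The map from `HoFib r y` to the homotopy fiber of `HoFib.map r l` given by the paths in the
source of `l` and their images under `l`. -/
def toHoFibMap (hl : l y = z) : C(HoFib r y, HoFib (map r l) (base l hl)) :=
  liftMap ⟨point, by fun_prop⟩
    { toFun p := p.2.path p.1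
      map_zero_left := by simp
      map_one_left := by simp }
    { toFun p := l (p.2.2.path (max p.2.1 p.1))
      map_zero_left := by simp
      map_one_left p := by simp [max_eq_right le_one', hl] }
    fun s a ↦ by simp [max_eq_left le_one', hl]

/-- The map from the homotopy fiber of `HoFib.map r l` to `HoFib r y` forgetting the paths in the
target of `l`. -/
def ofHoFibMap (hl : l y = z) : C(HoFib (map r l) (base l hl), HoFib r y) :=
  lift ⟨fun b ↦ b.point.point, by fun_prop⟩
    { toFun p := (p.2.path p.1).point
      map_zero_left := by simp
      map_one_left := by simp }

/-- The deformation of the homotopy fiber of `HoFib.map r l` from `toHoFibMap ∘ ofHoFibMap` to the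
identity. A point `b` is a map `(t, s) ↦ (b.path t).path s` on the square, which is constant where
`t = 1` or `s = 1`. The deformation replaces the segments `s ↦ (t, s)` in the square by the curves
`s ↦ (max t (s * p), s * q)`, where `(p, q)` moves from `(1, 0)` through `(1, 1)` to `(0, 1)`. -/
noncomputable def slide (hl : l y = z) :
    C(I × HoFib (map r l) (base l hl), HoFib (map r l) (base l hl)) :=
  let p (w : I) : I := Set.projIcc 0 1 zero_le_one (2 - 2 * w)
  let q (w : I) : I := Set.projIcc 0 1 zero_le_one (2 * w)
  have hpq (w : I) : p w = 1 ∨ q w = 1 := by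
    rcases le_total (1 / 2 : ℝ) w with hw | hw
    · exact .inr (Set.projIcc_of_right_le _ (by linarith))
    · exact .inl (Set.projIcc_of_right_le _ (by linarith))
  liftMap ⟨fun c ↦ c.2.point.point, by fun_prop⟩
    { toFun c := (c.2.2.path c.1).point
      map_zero_left := by simp
      map_one_left := by simp }
    { toFun c := (c.2.2.2.path (max c.2.1 (c.1 * p c.2.2.1))).path (c.1 * q c.2.2.1)
      map_zero_left := by simp
      map_one_left c := by
        rcases hpq c.2.1 with hw | hw <;> simp [hw, max_eq_right le_one'] }
    fun s c ↦ by simp [max_eq_left le_one']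

theorem slide_zero (b : HoFib (map r l) (base l hl)) :
    slide hl (0, b) = toHoFibMap hl (ofHoFibMap hl b) := by
  ext <;> simp [slide, toHoFibMap, ofHoFibMap, Set.projIcc_of_right_le]

theorem slide_one (b : HoFib (map r l) (base l hl)) : slide hl (1, b) = b := by
  ext <;> simp [slide, Set.projIcc_of_right_le]

/-- The homotopy fiber of `HoFib.map r l` is that of `r`. -/
noncomputable def homotopyEquivMap (r : C(X, Y)) (hl : l y = z) :
    HoFib r y ≃ₕ HoFib (map r l) (base l hl) where
  toFun := toHoFibMap hl
  invFun := ofHoFibMap hl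
  left_inv :=
    have : (ofHoFibMap hl).comp (toHoFibMap hl) = .id (HoFib r y) := by ext <;> rfl
    this ▸ .refl _
  right_inv :=
    ⟨{toContinuousMap := slide hl
      map_zero_left := slide_zero
      map_one_left := slide_one }⟩

end IteratedFiber

end HoFib

theorem stmt0_general {x₀ : X} {y₀ : Y} (r : C(X, Y)) (l : C(Y, X)) (hr : r x₀ = y₀)
    (hl : l y₀ = x₀) (h : (ContinuousMap.id X).Homotopic (l.comp r)) :
    Nonempty (HoFib r y₀ ≃ₕ Path (HoFib.base l hl) (HoFib.base l hl)) := by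
  have hlr : l.comp r x₀ = x₀ := by simp [hr, hl]
  have := HoFib.contractibleSpace_of_homotopic_id h x₀
  obtain ⟨e⟩ := HoFib.nonempty_homotopyEquiv_path (HoFib.map r l) (HoFib.base (l.comp r) hlr)
    (HoFib.base l hl)
  rw [HoFib.map_base r l hr hl] at e
  exact ⟨(HoFib.homotopyEquivMap r hl).trans e⟩

/-- Let `r : X → Y` be a pointed map between pointed topological spaces, `l : Y → X` a pointed
map, and `h` a pointed homotopy from the identity of `X` to `l ∘ r` (so `l` is a left homotopy
inverse of `r`).  Then the homotopy fiber of `r` (over the basepoint) is homotopy equivalent to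
the loop space of the homotopy fiber of `l`. -/
theorem stmt0 {x₀ : X} {y₀ : Y} (r : C(X, Y)) (l : C(Y, X))
    (hr : r x₀ = y₀) (hl : l y₀ = x₀)
    (h : ContinuousMap.HomotopyRel (ContinuousMap.id X) (l.comp r) {x₀}) :
    Nonempty (ContinuousMap.HomotopyEquiv (HoFib r y₀)
      (Path (HoFib.base l hl) (HoFib.base l hl))) :=
  stmt0_general r l hr hl ⟨h.toHomotopy⟩
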